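/- Let g be the heat kernel on the flat torus D = [0,2π]². For every β ∈ (0, 4/3) there exists C_β > 0 such that for all t > 0 and x ∈ D: ∫_0^t ∫_D |∇_y g(s,x,y)|^β dy ds ≤ C_β t^{-3β/2 + 2}. -/

import Mathlib

open Real MeasureTheory

/-- The heat kernel on the flat torus `[0,2π]²`, given by the method of images. -/
noncomputable def torusHeatKernel (t : ℝ) (x y : ℝ × ℝ) : ℝ :=
  (1 / (4 * π * t)) * ∑' k : ℤ × ℤ,
    Real.exp (-((x.1 - y.1 + 2 * π * k.1) ^ 2 + (x.2 - y.2 + 2 * π * k.2) ^ 2) / (4 * t))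

/-!
Measure both coordinates of `x - y` in full turns, as points `θ`, `φ` of the circle of length `1`,
and put `T = s / π`. By Poisson summation the heat kernel is
`cosKernel θ T * cosKernel φ T / (4 * π ^ 2)`, and a derivative turns one factor into `sinKernel`.
Everything rests on the bound `|sinKernel θ T| * |cosKernel φ T| ≲ T ^ (-3/2) * exp (-c * d² / T)`,
valid for all `T > 0`, where `d² = ‖θ‖² + ‖φ‖²`.

For `T ≤ 1` the functional equations pass to the Gaussian series `evenKernel` and `oddKernel` at
`1 / T`. Half of each exponent pays for the distance to the lattice or for the linear factor of
`oddKernel`; what remains is a Gaussian series, which is largest at `θ = 0` because its Fourier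
coefficients are positive. For `T ≥ 1` the Gaussian factor is bounded below, and `sinKernel` decays
because its Fourier series has no constant term.

Integrating the `β`-th power over the torus leaves `s ^ (1 - 3β/2)`, which is integrable at `0`
exactly because `β < 4/3`.
-/

open HurwitzZeta

section ThetaKernels

variable (θ φ : UnitAddCircle) {X T : ℝ}

lemma le_exp_sq_div_two (w : ℝ) : w ≤ rexp (w ^ 2 / 2) := by
  nlinarith [add_one_le_exp (w ^ 2 / 2), sq_nonneg (w - 1)]

lemma evenKernel_pos (hX : 0 < X) : 0 < evenKernel θ X := by
  induction θ using QuotientAddGroup.induction_on with | H a =>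
  have hsum := hasSum_int_evenKernel a hX
  exact hsum.tsum_eq ▸ hsum.summable.tsum_pos (fun _ ↦ (exp_pos _).le) 0 (exp_pos _)

lemma antitoneOn_evenKernel : AntitoneOn (evenKernel θ) (Set.Ioi 0) := by
  intro X hX Y hY hXY
  induction θ using QuotientAddGroup.induction_on with | H a =>
  refine hasSum_le (fun n ↦ exp_le_exp.2 ?_) (hasSum_int_evenKernel a hY)
    (hasSum_int_evenKernel a hX)
  have : 0 ≤ π * (n + a) ^ 2 := by positivity
  linarith [mul_le_mul_of_nonneg_left hXY this]

lemma abs_cosKernel_le_evenKernel_zero (hT : 0 < T) : |cosKernel θ T| ≤ evenKernel 0 T := by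
  induction θ using QuotientAddGroup.induction_on with | H a =>
  have hzero := hasSum_int_evenKernel 0 hT
  rw [QuotientAddGroup.mk_zero] at hzero
  rw [← norm_eq_abs, ← Complex.norm_real]
  refine (hasSum_int_cosKernel a hT).norm_le_of_bounded hzero fun n ↦ le_of_eq ?_
  rw [norm_mul, show 2 * (π : ℂ) * Complex.I * a * n = ((2 * π * a * n : ℝ) : ℂ) * Complex.I by
    push_cast; ring, Complex.norm_exp_ofReal_mul_I, Complex.norm_real, norm_eq_abs, abs_exp,
    one_mul, add_zero]

lemma evenKernel_le_evenKernel_zero (hX : 0 < X) : evenKernel θ X ≤ evenKernel 0 X := by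
  rw [evenKernel_functional_equation θ, evenKernel_functional_equation 0,
    ← evenKernel_eq_cosKernel_of_zero]
  gcongr
  exact (le_abs_self _).trans (abs_cosKernel_le_evenKernel_zero θ (by positivity))

lemma norm_coe_unitAddCircle_le_abs_int_add (a : ℝ) (n : ℤ) :
    ‖(a : UnitAddCircle)‖ ≤ |n + a| := by
  rw [UnitAddCircle.norm_eq]
  simpa [add_comm] using round_le a (-n)

lemma evenKernel_le_exp_mul_evenKernel_half (hX : 0 < X) :
    evenKernel θ X ≤ rexp (-(π * ‖θ‖ ^ 2 * X / 2)) * evenKernel θ (X / 2) := by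
  induction θ using QuotientAddGroup.induction_on with | H a =>
  refine hasSum_le (fun n ↦ ?_) (hasSum_int_evenKernel a hX)
    ((hasSum_int_evenKernel a (half_pos hX)).mul_left _)
  have hdist : ‖(a : UnitAddCircle)‖ ^ 2 ≤ (n + a) ^ 2 :=
    sq_le_sq.2 ((abs_norm _).trans_le (norm_coe_unitAddCircle_le_abs_int_add a n))
  rw [← exp_add, exp_le_exp]
  linarith [mul_le_mul_of_nonneg_left hdist (by positivity : 0 ≤ π * X / 2)]

lemma evenKernel_le_exp_mul_evenKernel_zero (hX : 0 < X) :
    evenKernel θ X ≤ rexp (-(π * ‖θ‖ ^ 2 * X / 2)) * evenKernel 0 (X / 2) := by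
  refine (evenKernel_le_exp_mul_evenKernel_half θ hX).trans ?_
  gcongr
  exact evenKernel_le_evenKernel_zero θ (half_pos hX)

lemma sqrt_mul_abs_mul_exp_le (hX : 0 ≤ X) (u : ℝ) :
    √X * (|u| * rexp (-π * u ^ 2 * X)) ≤ rexp (-π * u ^ 2 * (X / 2)) := by
  have hsq : (√X * |u|) ^ 2 = u ^ 2 * X := by rw [mul_pow, sq_sqrt hX, sq_abs, mul_comm]
  calc √X * (|u| * rexp (-π * u ^ 2 * X))
      ≤ rexp (u ^ 2 * X / 2) * rexp (-π * u ^ 2 * X) := by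
        rw [← mul_assoc, ← hsq]
        gcongr
        exact le_exp_sq_div_two _
    _ ≤ rexp (-π * u ^ 2 * (X / 2)) := by
        rw [← exp_add, exp_le_exp]
        nlinarith [pi_gt_three, mul_nonneg (sq_nonneg u) hX]

lemma sqrt_mul_abs_oddKernel_le (hX : 0 < X) :
    √X * |oddKernel θ X| ≤ evenKernel θ (X / 2) := by
  induction θ using QuotientAddGroup.induction_on with | H a =>
  rw [← abs_of_nonneg (sqrt_nonneg X), ← abs_mul]
  refine ((hasSum_int_oddKernel a hX).mul_left √X).norm_le_of_bounded
    (hasSum_int_evenKernel a (half_pos hX)) fun n ↦ ?_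
  rw [norm_mul, norm_mul, norm_of_nonneg (sqrt_nonneg X), norm_eq_abs, norm_eq_abs, abs_exp]
  exact sqrt_mul_abs_mul_exp_le hX.le (n + a)

lemma rpow_mul_abs_int_mul_exp_le (hT : 0 ≤ T) (n : ℤ) :
    T ^ (3 / 2 : ℝ) * (|(n : ℝ)| * rexp (-π * n ^ 2 * T)) ≤ rexp (-π * n ^ 2 * (T / 2)) := by
  have hpow : T ^ (3 / 2 : ℝ) = √T ^ 3 := by
    rw [sqrt_eq_rpow, ← rpow_mul_natCast hT]; norm_num
  have hcube : |(n : ℝ)| ≤ |(n : ℝ)| ^ 3 := by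
    rcases eq_or_ne n 0 with rfl | hn
    · simp
    · exact le_self_pow₀ (by exact_mod_cast Int.one_le_abs hn) three_ne_zero
  have hsq : (√T * |(n : ℝ)|) ^ 2 = n ^ 2 * T := by rw [mul_pow, sq_sqrt hT, sq_abs, mul_comm]
  calc T ^ (3 / 2 : ℝ) * (|(n : ℝ)| * rexp (-π * n ^ 2 * T))
      ≤ √T ^ 3 * (|(n : ℝ)| ^ 3 * rexp (-π * n ^ 2 * T)) := by
        rw [hpow]; gcongr
    _ = (√T * |(n : ℝ)|) ^ 3 * rexp (-π * n ^ 2 * T) := by ring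
    _ ≤ rexp ((√T * |(n : ℝ)|) ^ 2 / 2) ^ 3 * rexp (-π * n ^ 2 * T) := by
        gcongr
        exact le_exp_sq_div_two _
    _ ≤ rexp (-π * n ^ 2 * (T / 2)) := by
        rw [hsq, ← exp_nat_mul, ← exp_add, exp_le_exp]
        push_cast
        nlinarith [pi_gt_three, mul_nonneg (sq_nonneg (n : ℝ)) hT]

lemma rpow_mul_abs_sinKernel_le (hT : 0 < T) :
    T ^ (3 / 2 : ℝ) * |sinKernel θ T| ≤ evenKernel 0 (T / 2) := by
  induction θ using QuotientAddGroup.induction_on with | H a =>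
  have hzero := hasSum_int_evenKernel 0 (half_pos hT)
  rw [QuotientAddGroup.mk_zero] at hzero
  have hpow : 0 ≤ T ^ (3 / 2 : ℝ) := by positivity
  rw [← norm_eq_abs, ← Complex.norm_real, ← Complex.norm_of_nonneg hpow, ← norm_mul]
  refine ((hasSum_int_sinKernel a hT).mul_left _).norm_le_of_bounded hzero fun n ↦ ?_
  rw [show 2 * (π : ℂ) * Complex.I * a * n = ((2 * π * a * n : ℝ) : ℂ) * Complex.I by
    push_cast; ring]
  simp only [norm_mul, Complex.norm_exp_ofReal_mul_I, mul_one, Complex.norm_real, norm_eq_abs,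
    abs_exp, norm_neg, Complex.norm_I, one_mul, Complex.norm_intCast, abs_of_nonneg hpow, add_zero]
  exact rpow_mul_abs_int_mul_exp_le hT.le n

lemma cosKernel_eq_evenKernel_div_sqrt (hT : 0 < T) :
    cosKernel θ T = evenKernel θ (1 / T) / √T := by
  rw [evenKernel_functional_equation, one_div_one_div, ← sqrt_eq_rpow, sqrt_div' _ hT.le, sqrt_one]
  field_simp

lemma sinKernel_eq_oddKernel_div_rpow (hT : 0 < T) :
    sinKernel θ T = oddKernel θ (1 / T) / T ^ (3 / 2 : ℝ) := by
  rw [oddKernel_functional_equation, one_div_one_div, div_rpow zero_le_one hT.le, one_rpow]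
  field_simp

lemma rpow_mul_abs_sinKernel_mul_abs_cosKernel_le_of_le_one (hT : 0 < T) (hT1 : T ≤ 1) :
    T ^ (3 / 2 : ℝ) * (|sinKernel θ T| * |cosKernel φ T|) ≤
      evenKernel 0 (1 / 4) ^ 2 * rexp (-(π * (‖θ‖ ^ 2 + ‖φ‖ ^ 2) / (4 * T))) := by
  set X := 1 / T / 2 with hX
  have hX0 : 0 < X := by positivity
  have hX1 : 1 / 4 ≤ X / 2 := by rw [hX]; linarith [one_le_one_div hT hT1]
  have hgauss (ψ : UnitAddCircle) :
      evenKernel ψ X ≤ rexp (-(π * ‖ψ‖ ^ 2 * X / 2)) * evenKernel 0 (1 / 4) := by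
    refine (evenKernel_le_exp_mul_evenKernel_zero ψ hX0).trans ?_
    gcongr
    exact antitoneOn_evenKernel 0 (by norm_num) (half_pos hX0) hX1
  have hodd : |oddKernel θ (1 / T)| / √T ≤ evenKernel θ X := by
    simpa [hX, sqrt_inv, div_eq_inv_mul] using sqrt_mul_abs_oddKernel_le θ (one_div_pos.2 hT)
  have heven : evenKernel φ (1 / T) ≤ evenKernel φ X :=
    antitoneOn_evenKernel φ hX0 (one_div_pos.2 hT) (half_le_self (one_div_pos.2 hT).le)
  calc T ^ (3 / 2 : ℝ) * (|sinKernel θ T| * |cosKernel φ T|)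
      = |oddKernel θ (1 / T)| / √T * evenKernel φ (1 / T) := by
        rw [sinKernel_eq_oddKernel_div_rpow θ hT, cosKernel_eq_evenKernel_div_sqrt φ hT, abs_div,
          abs_div, abs_of_pos (evenKernel_pos φ (one_div_pos.2 hT)),
          abs_of_nonneg (sqrt_nonneg T), abs_of_pos (rpow_pos_of_pos hT _)]
        field_simp
    _ ≤ evenKernel θ X * evenKernel φ X :=
        mul_le_mul hodd heven (evenKernel_pos φ (one_div_pos.2 hT)).le (evenKernel_pos θ hX0).le
    _ ≤ rexp (-(π * ‖θ‖ ^ 2 * X / 2)) * evenKernel 0 (1 / 4) *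
          (rexp (-(π * ‖φ‖ ^ 2 * X / 2)) * evenKernel 0 (1 / 4)) :=
        mul_le_mul (hgauss θ) (hgauss φ) (evenKernel_pos φ hX0).le
          ((evenKernel_pos θ hX0).le.trans (hgauss θ))
    _ = evenKernel 0 (1 / 4) ^ 2 * rexp (-(π * (‖θ‖ ^ 2 + ‖φ‖ ^ 2) / (4 * T))) := by
        rw [mul_mul_mul_comm, ← exp_add, ← sq, mul_comm, hX]
        congr 2
        field_simp
        ring

lemma rpow_mul_abs_sinKernel_mul_abs_cosKernel_le_of_one_le (hT : 1 ≤ T) :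
    T ^ (3 / 2 : ℝ) * (|sinKernel θ T| * |cosKernel φ T|) ≤ evenKernel 0 (1 / 4) ^ 2 := by
  have hT0 : 0 < T := zero_lt_one.trans_le hT
  have hsin : T ^ (3 / 2 : ℝ) * |sinKernel θ T| ≤ evenKernel 0 (1 / 4) :=
    (rpow_mul_abs_sinKernel_le θ hT0).trans <|
      antitoneOn_evenKernel 0 (by norm_num) (half_pos hT0) (by linarith)
  have hcos : |cosKernel φ T| ≤ evenKernel 0 (1 / 4) :=
    (abs_cosKernel_le_evenKernel_zero φ hT0).trans <|
      antitoneOn_evenKernel 0 (by norm_num) hT0 (by linarith)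
  rw [← mul_assoc, sq]
  exact mul_le_mul hsin hcos (abs_nonneg _) (evenKernel_pos 0 (by norm_num)).le

lemma one_le_two_mul_exp_neg_norm_sq_unitAddCircle (hT : 1 ≤ T) :
    1 ≤ 2 * rexp (-(π * (‖θ‖ ^ 2 + ‖φ‖ ^ 2) / (4 * T))) := by
  have hhalf (ψ : UnitAddCircle) : ‖ψ‖ ^ 2 ≤ 1 / 4 := by
    have := AddCircle.norm_le_half_period 1 one_ne_zero (x := ψ)
    rw [abs_one] at this
    nlinarith [norm_nonneg ψ]
  have hexponent : π * (‖θ‖ ^ 2 + ‖φ‖ ^ 2) / (4 * T) ≤ 1 / 2 := by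
    rw [div_le_iff₀ (by positivity)]
    nlinarith [hhalf θ, hhalf φ, pi_pos, pi_lt_four]
  linarith [one_sub_le_exp_neg (π * (‖θ‖ ^ 2 + ‖φ‖ ^ 2) / (4 * T))]

lemma rpow_mul_abs_sinKernel_mul_abs_cosKernel_le_exp (hT : 0 < T) :
    T ^ (3 / 2 : ℝ) * (|sinKernel θ T| * |cosKernel φ T|) ≤
      2 * evenKernel 0 (1 / 4) ^ 2 * rexp (-(π * (‖θ‖ ^ 2 + ‖φ‖ ^ 2) / (4 * T))) := by
  rcases le_total T 1 with hT1 | hT1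
  · refine (rpow_mul_abs_sinKernel_mul_abs_cosKernel_le_of_le_one θ φ hT hT1).trans ?_
    gcongr
    exact le_mul_of_one_le_left (sq_nonneg _) one_le_two
  · refine (rpow_mul_abs_sinKernel_mul_abs_cosKernel_le_of_one_le θ φ hT1).trans ?_
    rw [mul_comm 2, mul_assoc]
    exact le_mul_of_one_le_right (sq_nonneg _)
      (one_le_two_mul_exp_neg_norm_sq_unitAddCircle θ φ hT1)

lemma hasDerivAt_cosKernel (a : ℝ) (hT : 0 < T) :
    HasDerivAt (fun a : ℝ ↦ cosKernel a T) (-2 * π * sinKernel a T) a := by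
  have hderiv := (hasDerivAt_jacobiTheta₂_fst (a : ℂ) (τ := Complex.I * T)
    (by simpa)).real_of_complex
  have hsin : jacobiTheta₂' a (Complex.I * T) = ((-2 * π * sinKernel a T : ℝ) : ℂ) := by
    push_cast
    rw [sinKernel_def]
    field_simp
  rw [hsin, Complex.ofReal_re] at hderiv
  simpa [← cosKernel_def] using hderiv

end ThetaKernels

section CircleIntegrals

lemma integral_addCircle_exp_neg_mul_norm_sq_le (p : ℝ) [hp : Fact (0 < p)] {b : ℝ} (hb : 0 < b) :
    ∫ θ : AddCircle p, rexp (-(b * ‖θ‖ ^ 2)) ≤ √(π / b) := by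
  have hIoc : ∀ u ∈ Set.Ioc (-(p / 2)) (-(p / 2) + p),
      rexp (-(b * ‖(u : AddCircle p)‖ ^ 2)) = rexp (-b * u ^ 2) := by
    intro u hu
    have hu' : |u| ≤ |p| / 2 := by
      rw [abs_of_pos hp.out, abs_le]
      constructor <;> linarith [hu.1, hu.2]
    rw [(AddCircle.norm_coe_eq_abs_iff p hp.out.ne').2 hu', sq_abs, neg_mul]
  rw [← AddCircle.integral_preimage p (-(p / 2)), setIntegral_congr_fun measurableSet_Ioc hIoc,
    ← integral_gaussian]
  exact setIntegral_le_integral (integrable_exp_neg_mul_sq hb) (.of_forall fun _ ↦ (exp_pos _).le)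

/-- The class of the angle `u` on the circle `ℝ / 2πℤ`, measured in full turns because Mathlib's
theta kernels live on the circle of length `1`. -/
noncomputable def turns (u : ℝ) : UnitAddCircle := ((u / (2 * π) : ℝ) : UnitAddCircle)

lemma continuous_turns : Continuous turns :=
  (AddCircle.continuous_mk' 1).comp (continuous_id.div_const _)

lemma setIntegral_turns_sub {E : Type*} [NormedAddCommGroup E] [NormedSpace ℝ E]
    (f : UnitAddCircle → E) (u : ℝ) :
    ∫ v in Set.Icc 0 (2 * π), f (turns (u - v)) = (2 * π) • ∫ θ, f θ := by
  have hpi : 2 * π ≠ 0 := by positivity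
  rw [integral_Icc_eq_integral_Ioc, ← intervalIntegral.integral_of_le (by positivity)]
  simp only [turns, sub_div]
  rw [intervalIntegral.integral_comp_sub_div (fun a : ℝ ↦ f a) hpi, div_self hpi, zero_div,
    ← UnitAddCircle.intervalIntegral_preimage (u / (2 * π) - 1), sub_add_cancel, sub_zero]

lemma setIntegral_exp_neg_mul_norm_turns_sub_sq_le (u : ℝ) {b : ℝ} (hb : 0 < b) :
    ∫ v in Set.Icc 0 (2 * π), rexp (-(b * ‖turns (u - v)‖ ^ 2)) ≤ 2 * π * √(π / b) := by
  rw [setIntegral_turns_sub (fun θ ↦ rexp (-(b * ‖θ‖ ^ 2))), smul_eq_mul]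
  gcongr
  exact integral_addCircle_exp_neg_mul_norm_sq_le 1 hb

lemma setIntegral_exp_neg_mul_norm_turns_sub_sq_add_le (x : ℝ × ℝ) {b : ℝ} (hb : 0 < b) :
    ∫ y in Set.Icc ((0 : ℝ), (0 : ℝ)) (2 * π, 2 * π),
        rexp (-(b * (‖turns (x.1 - y.1)‖ ^ 2 + ‖turns (x.2 - y.2)‖ ^ 2))) ≤ 4 * π ^ 3 / b := by
  simp only [mul_add, neg_add, exp_add]
  rw [← Set.Icc_prod_Icc, Measure.volume_eq_prod,
    setIntegral_prod_mul (fun v ↦ rexp (-(b * ‖turns (x.1 - v)‖ ^ 2)))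
      (fun v ↦ rexp (-(b * ‖turns (x.2 - v)‖ ^ 2)))]
  calc _ ≤ 2 * π * √(π / b) * (2 * π * √(π / b)) :=
        mul_le_mul (setIntegral_exp_neg_mul_norm_turns_sub_sq_le x.1 hb)
          (setIntegral_exp_neg_mul_norm_turns_sub_sq_le x.2 hb)
          (integral_nonneg fun _ ↦ (exp_pos _).le) (by positivity)
    _ = 4 * π ^ 3 / b := by
        rw [mul_mul_mul_comm, mul_self_sqrt (by positivity)]
        ring

end CircleIntegrals

section TorusHeatKernel

variable {s β : ℝ}

lemma torusHeatKernel_eq_cosKernel_mul_cosKernel (hs : 0 < s) (x y : ℝ × ℝ) :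
    torusHeatKernel s x y = 1 / (4 * π ^ 2) *
      (cosKernel (turns (x.1 - y.1)) (s / π) * cosKernel (turns (x.2 - y.2)) (s / π)) := by
  have hT : 0 < s / π := by positivity
  have hsum (u : ℝ) := hasSum_int_evenKernel (u / (2 * π)) (one_div_pos.2 hT)
  have hnorm (u : ℝ) := (hsum u).summable.norm
  have hterm (k : ℤ × ℤ) :
      rexp (-((x.1 - y.1 + 2 * π * k.1) ^ 2 + (x.2 - y.2 + 2 * π * k.2) ^ 2) / (4 * s)) =
      rexp (-π * (k.1 + (x.1 - y.1) / (2 * π)) ^ 2 * (1 / (s / π))) *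
        rexp (-π * (k.2 + (x.2 - y.2) / (2 * π)) ^ 2 * (1 / (s / π))) := by
    rw [← exp_add]
    congr 1
    field_simp
    ring
  rw [cosKernel_eq_evenKernel_div_sqrt _ hT, cosKernel_eq_evenKernel_div_sqrt _ hT,
    div_mul_div_comm, mul_self_sqrt hT.le, turns, turns, ← (hsum _).tsum_eq, ← (hsum _).tsum_eq,
    tsum_mul_tsum_of_summable_norm (hnorm _) (hnorm _), torusHeatKernel, tsum_congr hterm]
  generalize (∑' k : ℤ × ℤ, _ : ℝ) = Θ
  field_simp

lemma hasDerivAt_cosKernel_turns_sub (u v : ℝ) {T : ℝ} (hT : 0 < T) :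
    HasDerivAt (fun v ↦ cosKernel (turns (u - v)) T) (sinKernel (turns (u - v)) T) v := by
  have hinner : HasDerivAt (fun v ↦ (u - v) / (2 * π)) (-1 / (2 * π)) v :=
    ((hasDerivAt_id v).const_sub u).div_const _
  refine ((hasDerivAt_cosKernel ((u - v) / (2 * π)) hT).comp v hinner).congr_deriv ?_
  rw [turns]
  field_simp

lemma hasFDerivAt_torusHeatKernel (hs : 0 < s) (x y : ℝ × ℝ) :
    HasFDerivAt (torusHeatKernel s x)
      ((1 / (4 * π ^ 2)) •
        (cosKernel (turns (x.1 - y.1)) (s / π) •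
            sinKernel (turns (x.2 - y.2)) (s / π) • ContinuousLinearMap.snd ℝ ℝ ℝ +
          cosKernel (turns (x.2 - y.2)) (s / π) •
            sinKernel (turns (x.1 - y.1)) (s / π) • ContinuousLinearMap.fst ℝ ℝ ℝ)) y := by
  have hT : 0 < s / π := by positivity
  have hfst := (hasDerivAt_cosKernel_turns_sub x.1 y.1 hT).comp_hasFDerivAt y
    (hasFDerivAt_fst (𝕜 := ℝ))
  have hsnd := (hasDerivAt_cosKernel_turns_sub x.2 y.2 hT).comp_hasFDerivAt y
    (hasFDerivAt_snd (𝕜 := ℝ))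
  rw [funext (torusHeatKernel_eq_cosKernel_mul_cosKernel hs x)]
  exact (hfst.mul hsnd).const_mul _

lemma norm_fderiv_torusHeatKernel_le (hs : 0 < s) (x y : ℝ × ℝ) :
    ‖fderiv ℝ (torusHeatKernel s x) y‖ ≤ 1 / (4 * π ^ 2) *
      (|sinKernel (turns (x.2 - y.2)) (s / π)| * |cosKernel (turns (x.1 - y.1)) (s / π)| +
        |sinKernel (turns (x.1 - y.1)) (s / π)| * |cosKernel (turns (x.2 - y.2)) (s / π)|) := by
  rw [(hasFDerivAt_torusHeatKernel hs x y).fderiv, norm_smul, norm_of_nonneg (by positivity)]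
  gcongr
  refine (norm_add_le _ _).trans ?_
  simp only [smul_smul, norm_smul, norm_mul, norm_eq_abs]
  rw [mul_comm |cosKernel (turns (x.1 - y.1)) _|, mul_comm |cosKernel (turns (x.2 - y.2)) _|]
  exact add_le_add
    (mul_le_of_le_one_right (by positivity) (ContinuousLinearMap.norm_snd_le ..))
    (mul_le_of_le_one_right (by positivity) (ContinuousLinearMap.norm_fst_le ..))

lemma abs_sinKernel_mul_abs_cosKernel_div_pi_le_exp (θ φ : UnitAddCircle) (hs : 0 < s) :
    |sinKernel θ (s / π)| * |cosKernel φ (s / π)| ≤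
      2 * evenKernel 0 (1 / 4) ^ 2 * (π * √π) * s ^ (-(3 / 2) : ℝ) *
        rexp (-(π ^ 2 / (4 * s) * (‖θ‖ ^ 2 + ‖φ‖ ^ 2))) := by
  have hT : 0 < s / π := by positivity
  have hexponent : π * (‖θ‖ ^ 2 + ‖φ‖ ^ 2) / (4 * (s / π)) =
      π ^ 2 / (4 * s) * (‖θ‖ ^ 2 + ‖φ‖ ^ 2) := by
    field_simp
  have hpi : π ^ (3 / 2 : ℝ) = π * √π := by
    rw [sqrt_eq_rpow, ← rpow_one_add' pi_pos.le (by norm_num)]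
    norm_num
  have hbound := rpow_mul_abs_sinKernel_mul_abs_cosKernel_le_exp θ φ hT
  rw [hexponent, ← le_div_iff₀' (by positivity), div_rpow hs.le pi_pos.le, hpi] at hbound
  refine hbound.trans_eq ?_
  rw [rpow_neg hs.le]
  field_simp

lemma norm_fderiv_torusHeatKernel_le_gaussian (hs : 0 < s) (x y : ℝ × ℝ) :
    ‖fderiv ℝ (torusHeatKernel s x) y‖ ≤
      evenKernel 0 (1 / 4) ^ 2 / √π * s ^ (-(3 / 2) : ℝ) *
        rexp (-(π ^ 2 / (4 * s) * (‖turns (x.1 - y.1)‖ ^ 2 + ‖turns (x.2 - y.2)‖ ^ 2))) := by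
  set θ := turns (x.1 - y.1)
  set φ := turns (x.2 - y.2)
  have hfst := abs_sinKernel_mul_abs_cosKernel_div_pi_le_exp θ φ hs
  have hsnd := abs_sinKernel_mul_abs_cosKernel_div_pi_le_exp φ θ hs
  rw [add_comm (‖φ‖ ^ 2)] at hsnd
  refine (norm_fderiv_torusHeatKernel_le hs x y).trans
    ((mul_le_mul_of_nonneg_left (add_le_add hsnd hfst) (by positivity)).trans_eq ?_)
  field_simp
  rw [sq_sqrt pi_pos.le]
  ring

lemma norm_fderiv_torusHeatKernel_rpow_le_gaussian (hβ : 0 ≤ β) (hs : 0 < s)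
    (x y : ℝ × ℝ) :
    ‖fderiv ℝ (torusHeatKernel s x) y‖ ^ β ≤
      (evenKernel 0 (1 / 4) ^ 2 / √π) ^ β * s ^ (-(3 * β) / 2) *
        rexp (-(β * π ^ 2 / (4 * s) *
          (‖turns (x.1 - y.1)‖ ^ 2 + ‖turns (x.2 - y.2)‖ ^ 2))) := by
  refine (rpow_le_rpow (norm_nonneg _) (norm_fderiv_torusHeatKernel_le_gaussian hs x y)
    hβ).trans_eq ?_
  rw [mul_rpow (by positivity) (exp_pos _).le, mul_rpow (by positivity) (by positivity),
    ← rpow_mul hs.le, ← exp_mul]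
  ring_nf

lemma setIntegral_norm_fderiv_torusHeatKernel_rpow_le (hβ : 0 < β) (hs : 0 < s)
    (x : ℝ × ℝ) :
    ∫ y in Set.Icc ((0 : ℝ), (0 : ℝ)) (2 * π, 2 * π), ‖fderiv ℝ (torusHeatKernel s x) y‖ ^ β ≤
      (evenKernel 0 (1 / 4) ^ 2 / √π) ^ β * (16 * π / β) * s ^ (-(3 * β) / 2 + 1) := by
  set A := (evenKernel 0 (1 / 4) ^ 2 / √π) ^ β
  set b := β * π ^ 2 / (4 * s) with hb
  have hcont : Continuous fun y : ℝ × ℝ ↦ A * s ^ (-(3 * β) / 2) *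
      rexp (-(b * (‖turns (x.1 - y.1)‖ ^ 2 + ‖turns (x.2 - y.2)‖ ^ 2))) := by
    have := continuous_turns
    fun_prop
  calc ∫ y in Set.Icc ((0 : ℝ), (0 : ℝ)) (2 * π, 2 * π), ‖fderiv ℝ (torusHeatKernel s x) y‖ ^ β
      ≤ ∫ y in Set.Icc ((0 : ℝ), (0 : ℝ)) (2 * π, 2 * π), A * s ^ (-(3 * β) / 2) *
          rexp (-(b * (‖turns (x.1 - y.1)‖ ^ 2 + ‖turns (x.2 - y.2)‖ ^ 2))) :=
        integral_mono_of_nonneg (.of_forall fun _ ↦ by positivity)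
          hcont.integrableOn_Icc
          (.of_forall fun y ↦ norm_fderiv_torusHeatKernel_rpow_le_gaussian hβ.le hs x y)
    _ ≤ A * s ^ (-(3 * β) / 2) * (4 * π ^ 3 / b) := by
        rw [integral_const_mul]
        gcongr
        exact setIntegral_exp_neg_mul_norm_turns_sub_sq_add_le x (by positivity)
    _ = A * (16 * π / β) * s ^ (-(3 * β) / 2 + 1) := by
        rw [hb, rpow_add hs, rpow_one]
        field_simp
        ring

end TorusHeatKernel

lemma intervalIntegral_le_of_le_mul_rpow {f : ℝ → ℝ} {B r t : ℝ} (hr : -1 < r) (ht : 0 ≤ t)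
    (hf : ∀ s, 0 < s → 0 ≤ f s) (hle : ∀ s, 0 < s → f s ≤ B * s ^ r) :
    ∫ s in (0 : ℝ)..t, f s ≤ B / (r + 1) * t ^ (r + 1) := by
  calc ∫ s in (0 : ℝ)..t, f s ≤ ∫ s in (0 : ℝ)..t, B * s ^ r := by
        rw [intervalIntegral.integral_of_le ht, intervalIntegral.integral_of_le ht]
        exact integral_mono_of_nonneg
          (ae_restrict_of_forall_mem measurableSet_Ioc fun s hs ↦ hf s hs.1)
          ((intervalIntegral.intervalIntegrable_rpow' hr).const_mul B).1
          (ae_restrict_of_forall_mem measurableSet_Ioc fun s hs ↦ hle s hs.1)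
    _ = B / (r + 1) * t ^ (r + 1) := by
        rw [intervalIntegral.integral_const_mul, integral_rpow (.inl hr),
          zero_rpow (by linarith), sub_zero, mul_div_assoc', div_mul_eq_mul_div]

theorem torusHeatKernel_grad_Lbeta_time_bound_general (β : ℝ) (hβ : β ∈ Set.Ioo (0 : ℝ) (4 / 3)) :
    ∃ C : ℝ, 0 < C ∧ ∀ t : ℝ, 0 < t → ∀ x : ℝ × ℝ,
      (∫ s in (0 : ℝ)..t,
        ∫ y in Set.Icc ((0 : ℝ), (0 : ℝ)) (2 * π, 2 * π),
          ‖fderiv ℝ (fun y => torusHeatKernel s x y) y‖ ^ β)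
        ≤ C * t ^ (-(3 * β) / 2 + 2) := by
  obtain ⟨hβ0, hβ1⟩ := hβ
  set B := (evenKernel 0 (1 / 4) ^ 2 / √π) ^ β * (16 * π / β)
  have hB : 0 < B := by
    have := evenKernel_pos 0 (X := 1 / 4) (by norm_num)
    positivity
  have hexponent : -(3 * β) / 2 + 2 = -(3 * β) / 2 + 1 + 1 := by ring
  have hr : -1 < -(3 * β) / 2 + 1 := by linarith
  refine ⟨B / (-(3 * β) / 2 + 1 + 1), div_pos hB (by linarith), fun t ht x ↦ ?_⟩
  rw [hexponent]
  exact intervalIntegral_le_of_le_mul_rpow hr ht.le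
    (fun s _ ↦ integral_nonneg fun y ↦ by positivity)
    fun s hs ↦ setIntegral_norm_fderiv_torusHeatKernel_rpow_le hβ0 hs x

theorem torusHeatKernel_grad_Lbeta_time_bound (β : ℝ) (hβ : β ∈ Set.Ioo (0:ℝ) (4/3)) :
    ∃ C : ℝ, 0 < C ∧ ∀ t : ℝ, 0 < t →
      ∀ x ∈ Set.Icc ((0:ℝ), (0:ℝ)) (2 * π, 2 * π),
      (∫ s in (0:ℝ)..t,
        ∫ y in Set.Icc ((0:ℝ), (0:ℝ)) (2 * π, 2 * π),
          ‖fderiv ℝ (fun y => torusHeatKernel s x y) y‖ ^ β)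
        ≤ C * t ^ (-(3 * β) / 2 + 2) := by
  obtain ⟨C, hC, hbound⟩ := torusHeatKernel_grad_Lbeta_time_bound_general β hβ
  exact ⟨C, hC, fun t ht x _ ↦ hbound t ht x⟩
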